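/- Let m, d be positive integers, let α_1, …, α_m be nonnegative real numbers with α_1 + ⋯ + α_m = 1, and let U_1, …, U_m be d×d unitary complex matrices. Define Δ(B) = Σ_{j=1}^m α_j U_j B U_jᴴ for d×d complex matrices B. Then there exists an (m·d)×(m·d) unitary complex matrix U such that for every d×d complex matrix B, the block-diagonal compression of U·(diag(α) ⊗ B)·Uᴴ equals (1/m)·(I_m ⊗ Δ(B)). -/

import Mathlib

/-!
The dilation is `U = (F ⊗ I) · diag(V₁, …, V_m)`, where `F` is the unitary discrete Fourier matrix:
the `(k, j)` block of `U` is `F_{kj} V_j`. It is unitary because the columns of `F` are orthonormal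
and each `V_j` is unitary. The `k`-th diagonal block of `U (diag(α) ⊗ B) Uᴴ` is
`Σ_j |F_{kj}|² α_j V_j B V_jᴴ`, and this equals `(1/m) Δ(B)` since all entries of `F` have the same
squared modulus `1/m`. Only these two properties of `F` are used
(`exists_flat_unitary`).
-/

open Matrix
open scoped Kronecker

/-- The block-diagonal compression of an `(m·d) × (m·d)` matrix indexed by pairs:
it keeps the `m` diagonal `d × d` blocks and sets all off-diagonal blocks to zero. -/
def blockDiagCompress {m d : Type*} [DecidableEq m]
    (C : Matrix (m × d) (m × d) ℂ) : Matrix (m × d) (m × d) ℂ :=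
  fun p q => if p.1 = q.1 then C p (p.1, q.2) else 0

/-- There is a unitary matrix all of whose entries have squared modulus `1/m`: the normalized
Fourier matrix with entries `ζ ^ (k j) / √m` for a primitive `m`-th root of unity `ζ`. -/
lemma exists_flat_unitary (m : ℕ) (hm : 0 < m) :
    ∃ F : Matrix (Fin m) (Fin m) ℂ, Fᴴ * F = 1 ∧ ∀ k j, F k j * star (F k j) = 1 / m := by
  have hm0 : (m : ℂ) ≠ 0 := by exact_mod_cast hm.ne'
  obtain ⟨ζ, hζ⟩ : ∃ ζ : ℂ, IsPrimitiveRoot ζ m := ⟨_, Complex.isPrimitiveRoot_exp m hm.ne'⟩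
  have hnorm : ζ * star ζ = 1 := by
    have h : ‖ζ‖ = 1 := hζ.norm'_eq_one hm.ne'
    rw [Complex.star_def, Complex.mul_conj', h]; norm_num
  have hpow (n : ℕ) : ζ ^ n * star ζ ^ n = 1 := by rw [← mul_pow, hnorm, one_pow]
  have hsq : ((√(m : ℝ) : ℝ) : ℂ)⁻¹ * ((√(m : ℝ) : ℝ) : ℂ)⁻¹ = 1 / m := by
    rw [← mul_inv, ← Complex.ofReal_mul, Real.mul_self_sqrt (Nat.cast_nonneg m)]
    simp
  obtain ⟨F, hF⟩ : ∃ F : Matrix (Fin m) (Fin m) ℂ,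
      ∀ k j, F k j = ((√(m : ℝ) : ℝ) : ℂ)⁻¹ * ζ ^ ((k : ℕ) * j) :=
    ⟨Matrix.of fun k j => ((√(m : ℝ) : ℝ) : ℂ)⁻¹ * ζ ^ ((k : ℕ) * j), fun _ _ => rfl⟩
  refine ⟨F, ?_, ?_⟩
  · ext i j
    -- The inner product of columns `i` and `j` is a geometric sum in `x = ζ ^ (j - i)`.
    set x : ℂ := star ζ ^ (i : ℕ) * ζ ^ (j : ℕ) with hx
    have hsum : (Fᴴ * F) i j = 1 / m * ∑ k ∈ Finset.range m, x ^ k := by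
      rw [← Fin.sum_univ_eq_sum_range (fun k => x ^ k), Matrix.mul_apply, Finset.mul_sum]
      refine Finset.sum_congr rfl fun k _ => ?_
      rw [Matrix.conjTranspose_apply, hF, hF, ← hsq, hx]
      simp only [star_mul', star_pow, star_inv₀, Complex.star_def, Complex.conj_ofReal]
      ring
    rw [hsum]
    have hxm : x ^ m = 1 := by
      have h : star ζ ^ m = 1 := by rw [← star_pow, hζ.pow_eq_one, star_one]
      rw [hx, mul_pow, ← pow_mul, ← pow_mul, mul_comm (i : ℕ), mul_comm (j : ℕ), pow_mul, pow_mul,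
        h, hζ.pow_eq_one, one_pow, one_pow, one_mul]
    by_cases hij : i = j
    · subst hij
      have h1 : x = 1 := by rw [hx, mul_comm, hpow]
      simp [h1, hm0]
    · have h1 : x ≠ 1 := by
        intro h1
        refine hij (Fin.ext (hζ.pow_inj i.2 j.2 ?_))
        calc ζ ^ (i : ℕ) = ζ ^ (i : ℕ) * x := by rw [h1, mul_one]
          _ = ζ ^ (j : ℕ) := by rw [hx, ← mul_assoc, hpow, one_mul]
      rw [geom_sum_eq h1, hxm, Matrix.one_apply_ne hij]
      simp
  · intro k j
    rw [← hsq, hF]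
    simp only [star_mul', star_pow, star_inv₀, Complex.star_def, Complex.conj_ofReal]
    have := hpow (k * j)
    rw [Complex.star_def] at this
    linear_combination ((√(m : ℝ) : ℝ) : ℂ)⁻¹ * ((√(m : ℝ) : ℝ) : ℂ)⁻¹ * this

/-- Unitary dilation of a mixture of unitaries: given `Δ(B) = Σ_j α_j U_j B U_jᴴ`
with each `U_j` unitary and `α` a probability vector, there is a unitary `U` on the
`m·d`-dimensional space with
`E_{A_m ⊗ M_d}(U (diag(α) ⊗ B) Uᴴ) = (1/m) I_m ⊗ Δ(B)` for all `B`. -/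
theorem exists_unitary_dilation_of_mixture
    (m d : ℕ) (hm : 0 < m) (hd : 0 < d)
    (α : Fin m → ℝ) (hα : ∀ j, 0 ≤ α j) (hsum : ∑ j, α j = 1)
    (V : Fin m → Matrix (Fin d) (Fin d) ℂ) (hV : ∀ j, (V j)ᴴ * V j = 1) :
    ∃ U : Matrix (Fin m × Fin d) (Fin m × Fin d) ℂ, Uᴴ * U = 1 ∧
      ∀ B : Matrix (Fin d) (Fin d) ℂ,
        blockDiagCompress (U * ((Matrix.diagonal fun j => (α j : ℂ)) ⊗ₖ B) * Uᴴ)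
          = ((1 : ℂ) / m) •
              ((1 : Matrix (Fin m) (Fin m) ℂ) ⊗ₖ (∑ j, (α j : ℂ) • (V j * B * (V j)ᴴ))) := by
  obtain ⟨F, hF, hflat⟩ := exists_flat_unitary m hm
  obtain ⟨U, hU⟩ : ∃ U : Matrix (Fin m × Fin d) (Fin m × Fin d) ℂ,
      ∀ k a j b, U (k, a) (j, b) = F k j * V j a b :=
    ⟨Matrix.of fun p q => F p.1 q.1 * V q.1 p.2 q.2, fun _ _ _ _ => rfl⟩
  refine ⟨U, ?_, fun B => ?_⟩
  · ext ⟨i, a⟩ ⟨j, b⟩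
    have hprod : (Uᴴ * U) (i, a) (j, b) = (Fᴴ * F) i j * ((V i)ᴴ * V j) a b := by
      simp only [Matrix.mul_apply, Matrix.conjTranspose_apply, Fintype.sum_prod_type,
        Finset.sum_mul_sum, star_mul', hU]
      refine Finset.sum_congr rfl fun k _ => Finset.sum_congr rfl fun c _ => ?_
      ring
    rw [hprod, hF]
    by_cases hij : i = j
    · subst hij
      simp [hV, Matrix.one_apply]
    · simp [Matrix.one_apply, hij]
  · ext ⟨i, a⟩ ⟨j, b⟩
    by_cases hij : i = j
    · subst hij
      simp only [blockDiagCompress, if_true, Matrix.smul_apply, Matrix.kroneckerMap_apply,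
        Matrix.one_apply_eq, one_mul, Matrix.sum_apply, smul_eq_mul, Finset.mul_sum,
        Matrix.mul_apply, Matrix.conjTranspose_apply, Fintype.sum_prod_type, Finset.sum_mul,
        star_mul', Matrix.diagonal_apply, hU]
      refine Finset.sum_congr rfl fun k _ => Finset.sum_congr rfl fun c _ => ?_
      -- The diagonal factor leaves only the block index `k` in the inner sum.
      rw [Finset.sum_eq_single k (fun l _ hl => by simp [hl]) (by simp)]
      refine Finset.sum_congr rfl fun e _ => ?_
      rw [if_pos rfl, ← hflat i k]
      ring
    · simp [blockDiagCompress, hij]
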